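/- Let β > 0, J > 0, b ≥ 0, and let κ > 0 be a constant such that liminf_{N→∞} E[⟨U_N⟩]/N ≥ −κ. Then the lower limit of the mean spin-glass order parameter satisfies liminf_{N→∞} E[q_N] ≥ Φ(2βb·tanh(βb)) − 2κ/(βJ). -/

import Mathlib

open Matrix MeasureTheory ProbabilityTheory

noncomputable section

abbrev Conf (N : ℕ) := Fin N → Fin 2

def Sz (N : ℕ) (j : Fin N) : Matrix (Conf N) (Conf N) ℂ :=
  Matrix.diagonal fun σ => if σ j = 0 then 1 else -1

def Sx (N : ℕ) (j : Fin N) : Matrix (Conf N) (Conf N) ℂ :=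
  Matrix.of fun σ τ => if τ = Function.update σ j (1 - σ j) then 1 else 0

def UN (N : ℕ) (g : Fin N → Fin N → ℝ) : Matrix (Conf N) (Conf N) ℂ :=
  (-(1 / Real.sqrt N)) • ∑ j : Fin N, ∑ k : Fin N,
    if j < k then g j k • (Sz N j * Sz N k) else 0

def HN (N : ℕ) (J b : ℝ) (g : Fin N → Fin N → ℝ) : Matrix (Conf N) (Conf N) ℂ :=
  J • UN N g - b • ∑ j : Fin N, Sx N j

/-- Gibbs expectation (real part of the trace ratio). -/
def gibbs {n : Type*} [Fintype n] [DecidableEq n] (β : ℝ) (H A : Matrix n n ℂ) : ℝ :=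
  ((NormedSpace.exp ((-β) • H) * A).trace / (NormedSpace.exp ((-β) • H)).trace).re

def qN (N : ℕ) (β J b : ℝ) (g : Fin N → Fin N → ℝ) : ℝ :=
  (2 / ((N : ℝ) * ((N : ℝ) - 1))) * ∑ j : Fin N, ∑ k : Fin N,
    if j < k then (gibbs β (HN N J b g) (Sz N j * Sz N k)) ^ 2 else 0

/-!
Gaussian integration by parts in the couplings gives
`E⟨U_N⟩ / N = -(βJ/2) (1 - 1/N) (D_N - E q_N)`, where `D_N` is the average over disorder and pairs
of the Duhamel self-correlation of `Sⱼᶻ Sₖᶻ`. Since `(Sⱼᶻ Sₖᶻ)² = 1`, the Falk–Bruch inequality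
bounds this self-correlation below by `Φ` at a quarter of the thermal average of the double
commutator of `Sⱼᶻ Sₖᶻ` with `βH_N`. Up to sign that double commutator is `4βb (Sⱼˣ + Sₖˣ)`, because
the interaction commutes with `Sⱼᶻ Sₖᶻ`, and comparison with a single spin in the field gives
`b⟨Sⱼˣ⟩ ≤ b tanh (βb)`. Hence `D_N ≥ Φ(2βb tanh (βb))`, and it remains to let `N → ∞`.
-/

section ExponentialAlongLine

variable {𝔸 : Type*} [NormedRing 𝔸] [NormedAlgebra ℝ 𝔸] [CompleteSpace 𝔸]

theorem continuous_exp : Continuous (NormedSpace.exp : 𝔸 → 𝔸) :=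
  letI : NormedAlgebra ℚ 𝔸 := NormedAlgebra.restrictScalars ℚ ℝ 𝔸
  NormedSpace.exp_continuous

theorem exp_sub_exp_eq_integral (A B : 𝔸) :
    NormedSpace.exp A - NormedSpace.exp B =
      ∫ s in (0 : ℝ)..1,
        NormedSpace.exp (s • A) * (A - B) * NormedSpace.exp ((1 - s) • B) := by
  have hderiv (s : ℝ) :
      HasDerivAt (fun s : ℝ => NormedSpace.exp (s • A) * NormedSpace.exp ((1 - s) • B))
        (NormedSpace.exp (s • A) * (A - B) * NormedSpace.exp ((1 - s) • B)) s := by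
    have hA := hasDerivAt_exp_smul_const (𝕂 := ℝ) A s
    have hB := (hasDerivAt_exp_smul_const' (𝕂 := ℝ) B (1 - s)).scomp s
      ((hasDerivAt_id s).const_sub 1)
    refine (hA.mul hB).congr_deriv ?_
    simp only [Function.comp_apply, neg_smul, one_smul]
    noncomm_ring
  have := continuous_exp (𝔸 := 𝔸)
  rw [intervalIntegral.integral_eq_sub_of_hasDerivAt (fun s _ => hderiv s)
    (Continuous.intervalIntegrable (by fun_prop) _ _)]
  simp

theorem hasDerivAt_exp_add_smul (A B : 𝔸) (t : ℝ) :
    HasDerivAt (fun t : ℝ => NormedSpace.exp (A + t • B))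
      (∫ s in (0 : ℝ)..1, NormedSpace.exp (s • (A + t • B)) * B *
        NormedSpace.exp ((1 - s) • (A + t • B))) t := by
  have := continuous_exp (𝔸 := 𝔸)
  have hslope_cont : Continuous fun u : ℝ => ∫ s in (0 : ℝ)..1,
      NormedSpace.exp (s • (A + u • B)) * B * NormedSpace.exp ((1 - s) • (A + t • B)) := by
    apply intervalIntegral.continuous_parametric_intervalIntegral_of_continuous'
    simp only [Function.uncurry_def]
    fun_prop
  refine hasDerivAt_iff_tendsto_slope.2
    ((hslope_cont.tendsto t |>.mono_left nhdsWithin_le_nhds).congr' ?_)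
  filter_upwards [self_mem_nhdsWithin] with u hu
  have hdiff : A + u • B - (A + t • B) = (u - t) • B := by rw [sub_smul]; abel
  simp only [slope_def_module, exp_sub_exp_eq_integral (A + u • B), hdiff, mul_smul_comm,
    smul_mul_assoc]
  rw [intervalIntegral.integral_smul, inv_smul_smul₀ (sub_ne_zero.2 hu)]

theorem hasDerivAt_clm_exp_add_smul (L : 𝔸 →L[ℝ] ℝ) (A B : 𝔸) (t : ℝ) :
    HasDerivAt (fun t : ℝ => L (NormedSpace.exp (A + t • B)))
      (∫ s in (0 : ℝ)..1, L (NormedSpace.exp (s • (A + t • B)) * B *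
        NormedSpace.exp ((1 - s) • (A + t • B)))) t := by
  have := continuous_exp (𝔸 := 𝔸)
  rw [ContinuousLinearMap.intervalIntegral_comp_comm L
    (Continuous.intervalIntegrable (by fun_prop) _ _)]
  exact L.hasFDerivAt.comp_hasDerivAt t (hasDerivAt_exp_add_smul A B t)

end ExponentialAlongLine

section TraceFunctionals

variable {n : Type*} [Fintype n] [DecidableEq n]

/-- The unnormalized thermal expectation `A ↦ Re tr (e ^ M * A)` of the Gibbs weight `e ^ M`. -/
def expTrace (M : Matrix n n ℂ) : Matrix n n ℂ →ₗ[ℝ] ℝ :=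
  Complex.reLm ∘ₗ Matrix.traceLinearMap n ℝ ℂ ∘ₗ LinearMap.mulLeft ℝ (NormedSpace.exp M)

/-- The unnormalized Duhamel (Bogoliubov) pairing of `A` and `B` in the Gibbs weight `e ^ M`. -/
def duhamel (M A B : Matrix n n ℂ) : ℝ :=
  ∫ s in (0 : ℝ)..1,
    (NormedSpace.exp (s • M) * A * NormedSpace.exp ((1 - s) • M) * B).trace.re

/-- The thermal expectation of `A` in the Gibbs state with weight `e ^ M`. -/
def thermalAvg (M A : Matrix n n ℂ) : ℝ := expTrace M A / expTrace M 1

/-- The Duhamel self-correlation of `A` in the Gibbs state with weight `e ^ M`. -/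
def duhamelCorr (M A : Matrix n n ℂ) : ℝ := duhamel M A A / expTrace M 1

theorem expTrace_apply (M A : Matrix n n ℂ) :
    expTrace M A = (NormedSpace.exp M * A).trace.re := rfl

open scoped Matrix.Norms.Operator in
theorem continuous_expTrace (A : Matrix n n ℂ) : Continuous fun M => expTrace M A := by
  have := continuous_exp (𝔸 := Matrix n n ℂ)
  simp only [expTrace_apply]
  exact Complex.continuous_re.comp (Continuous.matrix_trace (by fun_prop))

open scoped Matrix.Norms.Operator in
theorem continuous_duhamel (A B : Matrix n n ℂ) : Continuous fun M => duhamel M A B := by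
  have := continuous_exp (𝔸 := Matrix n n ℂ)
  apply intervalIntegral.continuous_parametric_intervalIntegral_of_continuous'
  simp only [Function.uncurry_def]
  exact Complex.continuous_re.comp (Continuous.matrix_trace (by fun_prop))

theorem duhamel_one_right (M A : Matrix n n ℂ) : duhamel M A 1 = expTrace M A := by
  have hconst (s : ℝ) :
      (NormedSpace.exp (s • M) * A * NormedSpace.exp ((1 - s) • M) * 1).trace.re =
        expTrace M A := by
    have hcomm : Commute ((1 - s) • M) (s • M) :=
      ((Commute.refl M).smul_left _).smul_right _
    rw [mul_one, Matrix.trace_mul_comm, ← mul_assoc, ← Matrix.exp_add_of_commute _ _ hcomm,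
      ← add_smul, sub_add_cancel, one_smul, expTrace_apply]
  simp only [duhamel, hconst, intervalIntegral.integral_const, sub_zero, one_smul]

open scoped Matrix.Norms.Operator in
theorem hasDerivAt_expTrace (M A B : Matrix n n ℂ) (t : ℝ) :
    HasDerivAt (fun t : ℝ => expTrace (M + t • A) B) (duhamel (M + t • A) A B) t := by
  exact hasDerivAt_clm_exp_add_smul (𝔸 := Matrix n n ℂ) (LinearMap.toContinuousLinearMap
    (Complex.reLm ∘ₗ Matrix.traceLinearMap n ℝ ℂ ∘ₗ LinearMap.mulRight ℝ B)) M A t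

theorem hasDerivAt_expTrace_one (M A : Matrix n n ℂ) (t : ℝ) :
    HasDerivAt (fun t : ℝ => expTrace (M + t • A) 1) (expTrace (M + t • A) A) t :=
  (hasDerivAt_expTrace M A 1 t).congr_deriv (duhamel_one_right _ _)

theorem hasDerivAt_thermalAvg {M A : Matrix n n ℂ} {t : ℝ}
    (hZ : expTrace (M + t • A) 1 ≠ 0) :
    HasDerivAt (fun t : ℝ => thermalAvg (M + t • A) A)
      (duhamelCorr (M + t • A) A - thermalAvg (M + t • A) A ^ 2) t := by
  refine ((hasDerivAt_expTrace M A A t).div (hasDerivAt_expTrace_one M A t) hZ).congr_deriv ?_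
  simp only [duhamelCorr, thermalAvg]
  field_simp

end TraceFunctionals

section MonotonicityFromDerivative

variable {f f' : ℝ → ℝ} {a t x : ℝ}

theorem nonneg_of_hasDerivAt_nonneg (hf : ∀ y, a ≤ y → HasDerivAt f (f' y) y)
    (hf' : ∀ y, a ≤ y → 0 ≤ f' y) (ha : 0 ≤ f a) (hx : a ≤ x) : 0 ≤ f x := by
  refine ha.trans (monotoneOn_of_hasDerivWithinAt_nonneg (convex_Ici a)
    (fun y hy => (hf y hy).continuousAt.continuousWithinAt)
    (fun y hy => (hf y (interior_subset hy)).hasDerivWithinAt)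
    (fun y hy => hf' y (interior_subset hy)) Set.self_mem_Ici hx hx)

theorem le_of_hasDerivAt_nonpos_of_nonneg (hf : ∀ y, a < y → HasDerivAt f (f' y) y)
    (hleft : ∀ y, a < y → y ≤ t → f' y ≤ 0) (hright : ∀ y, t ≤ y → 0 ≤ f' y)
    (ht : a < t) (hx : a < x) : f t ≤ f x := by
  rcases le_total x t with hxt | htx
  · have hanti : AntitoneOn f (Set.Icc x t) := antitoneOn_of_hasDerivWithinAt_nonpos
      (convex_Icc x t) (fun y hy => (hf y (hx.trans_le hy.1)).continuousAt.continuousWithinAt)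
      (fun y hy => (hf y (hx.trans_le (interior_subset hy).1)).hasDerivWithinAt)
      (fun y hy => hleft y (hx.trans_le (interior_subset hy).1) (interior_subset hy).2)
    exact hanti ⟨le_rfl, hxt⟩ ⟨hxt, le_rfl⟩ hxt
  · have hmono : MonotoneOn f (Set.Ici t) := monotoneOn_of_hasDerivWithinAt_nonneg
      (convex_Ici t) (fun y hy => (hf y (ht.trans_le hy)).continuousAt.continuousWithinAt)
      (fun y hy => (hf y (ht.trans_le (interior_subset hy))).hasDerivWithinAt)
      (fun y hy => hright y (interior_subset hy))
    exact hmono Set.self_mem_Ici htx htx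

end MonotonicityFromDerivative

section Hyperbolic

open Real

theorem hasDerivAt_tanh (r : ℝ) : HasDerivAt tanh (1 - tanh r ^ 2) r := by
  have hquot := (hasDerivAt_sinh r).div (hasDerivAt_cosh r) (cosh_pos r).ne'
  rw [show sinh / cosh = tanh from (funext tanh_eq_sinh_div_cosh).symm] at hquot
  refine hquot.congr_deriv ?_
  have := (cosh_pos r).ne'
  rw [tanh_eq_sinh_div_cosh]
  field_simp

theorem tanh_nonneg {r : ℝ} (hr : 0 ≤ r) : 0 ≤ tanh r := by
  rw [tanh_eq_sinh_div_cosh]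
  exact div_nonneg (sinh_nonneg_iff.2 hr) (cosh_pos r).le

theorem mul_tanh_nonneg (r : ℝ) : 0 ≤ r * tanh r := by
  rcases le_total 0 r with hr | hr
  · exact mul_nonneg hr (tanh_nonneg hr)
  · simpa only [tanh_neg, neg_mul_neg] using
      mul_nonneg (neg_nonneg.2 hr) (tanh_nonneg (neg_nonneg.2 hr))

theorem tanh_le_self {r : ℝ} (hr : 0 ≤ r) : tanh r ≤ r := by
  refine sub_nonneg.1 (nonneg_of_hasDerivAt_nonneg (f := fun r => r - tanh r)
    (fun y _ => (hasDerivAt_id y).sub (hasDerivAt_tanh y)) (fun y _ => ?_) (by simp) hr)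
  linarith [sq_nonneg (tanh y)]

theorem sub_cube_div_three_le_tanh {r : ℝ} (hr : 0 ≤ r) : r - r ^ 3 / 3 ≤ tanh r := by
  refine sub_nonneg.1 (nonneg_of_hasDerivAt_nonneg (f := fun r => tanh r - (r - r ^ 3 / 3))
    (fun y _ => (hasDerivAt_tanh y).sub
      ((hasDerivAt_id y).sub ((hasDerivAt_pow 3 y).div_const 3))) (fun y hy => ?_) (by simp) hr)
  have htanh : tanh y ^ 2 ≤ y ^ 2 := pow_le_pow_left₀ (tanh_nonneg hy) (tanh_le_self hy) 2
  norm_num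
  linarith

theorem one_add_sq_div_two_le_cosh {r : ℝ} (hr : 0 ≤ r) : 1 + r ^ 2 / 2 ≤ cosh r := by
  refine sub_nonneg.1 (nonneg_of_hasDerivAt_nonneg (f := fun r => cosh r - (1 + r ^ 2 / 2))
    (fun y _ => (hasDerivAt_cosh y).sub (((hasDerivAt_pow 2 y).div_const 2).const_add 1))
    (fun y hy => ?_) (by simp) hr)
  simpa using self_le_sinh_iff.2 hy

theorem add_cube_div_six_le_sinh {r : ℝ} (hr : 0 ≤ r) : r + r ^ 3 / 6 ≤ sinh r := by
  refine sub_nonneg.1 (nonneg_of_hasDerivAt_nonneg (f := fun r => sinh r - (r + r ^ 3 / 6))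
    (fun y _ => (hasDerivAt_sinh y).sub
      ((hasDerivAt_id y).add ((hasDerivAt_pow 3 y).div_const 6))) (fun y hy => ?_) (by simp) hr)
  norm_num
  linarith [one_add_sq_div_two_le_cosh hy]

/-- Wilker's inequality for hyperbolic functions, with denominators cleared. -/
theorem two_mul_sq_le_sinh_sq_add_mul_tanh {r : ℝ} (hr : 0 ≤ r) :
    2 * r ^ 2 ≤ sinh r ^ 2 + r * tanh r := by
  have hsinh := pow_le_pow_left₀ (by positivity) (add_cube_div_six_le_sinh hr) 2
  have htanh := mul_le_mul_of_nonneg_left (sub_cube_div_three_le_tanh hr) hr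
  nlinarith [pow_nonneg hr 6]

theorem tendsto_mul_tanh_atTop :
    Filter.Tendsto (fun r => r * tanh r) Filter.atTop Filter.atTop := by
  have hmono : Monotone tanh :=
    monotone_of_hasDerivAt_nonneg hasDerivAt_tanh fun r => (sub_pos.2 (tanh_sq_lt_one r)).le
  have htanh_one : 0 < tanh 1 := by linarith [sub_cube_div_three_le_tanh zero_le_one]
  refine Filter.tendsto_atTop_mono' _ ?_ (Filter.tendsto_id.atTop_mul_const htanh_one)
  filter_upwards [Filter.eventually_ge_atTop 1] with r hr
  exact mul_le_mul_of_nonneg_left (hmono hr) (zero_le_one.trans hr)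

theorem exists_mul_tanh_eq {x : ℝ} (hx : 0 ≤ x) : ∃ r, 0 ≤ r ∧ r * tanh r = x := by
  have hcont : Continuous fun r => r * tanh r :=
    continuous_id.mul (continuous_iff_continuousAt.2 fun r => (hasDerivAt_tanh r).continuousAt)
  obtain ⟨R, hxR, hR⟩ := ((tendsto_mul_tanh_atTop.eventually_ge_atTop x).and
    (Filter.eventually_ge_atTop 0)).exists
  obtain ⟨r, hr, hrx⟩ := intermediate_value_Icc hR hcont.continuousOn ⟨by simpa using hx, hxR⟩
  exact ⟨r, hr.1, hrx⟩

end Hyperbolic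

section FalkBruchCurve

open Real

/-- Supporting-line form of `φ ≤ Φ x₀`: some line of slope `-s ≤ 0` through `(x₀, φ)` stays below
the Falk–Bruch curve `r ↦ (r * tanh r, tanh r / r)`, which is the graph of `Φ`. -/
def IsBelowFalkBruch (φ x₀ : ℝ) : Prop :=
  ∃ s, 0 ≤ s ∧ ∀ r, 0 < r → φ - s * (r * tanh r - x₀) ≤ tanh r / r

theorem isBelowFalkBruch_one_zero : IsBelowFalkBruch 1 0 := by
  refine ⟨1, zero_le_one, fun r hr => ?_⟩
  have hsinh : 0 ≤ (r ^ 2 + 1) * sinh r - r * cosh r := by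
    refine nonneg_of_hasDerivAt_nonneg (f := fun r => (r ^ 2 + 1) * sinh r - r * cosh r)
      (fun y _ => (((hasDerivAt_pow 2 y).add_const 1).mul (hasDerivAt_sinh y)).sub
        ((hasDerivAt_id y).mul (hasDerivAt_cosh y))) (fun y hy => ?_) (by simp) hr.le
    have := mul_nonneg (sq_nonneg y) (cosh_pos y).le
    have := mul_nonneg hy (sinh_nonneg_iff.2 hy)
    norm_num
    linarith
  rw [le_div_iff₀ hr, tanh_eq_sinh_div_cosh, le_div_iff₀ (cosh_pos r)]
  have hcosh := (cosh_pos r).ne'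
  field_simp
  linarith

/-- Minus the slope `dy / dx` of the curve `(x, y) = (r * tanh r, tanh r / r)`. -/
def falkBruchSlope (r : ℝ) : ℝ :=
  (tanh r - r * (1 - tanh r ^ 2)) / (r ^ 2 * (tanh r + r * (1 - tanh r ^ 2)))

theorem hasDerivAt_mul_one_sub_tanh_sq (r : ℝ) :
    HasDerivAt (fun r => r * (1 - tanh r ^ 2))
      ((1 - tanh r ^ 2) * (1 - 2 * r * tanh r)) r := by
  refine ((hasDerivAt_id r).mul (((hasDerivAt_tanh r).pow 2).const_sub 1)).congr_deriv ?_
  simp only [id, Pi.pow_apply, Nat.cast_ofNat, Nat.add_one_sub_one, pow_one]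
  ring

theorem tanh_add_mul_one_sub_tanh_sq_pos {r : ℝ} (hr : 0 < r) :
    0 < tanh r + r * (1 - tanh r ^ 2) :=
  add_pos_of_nonneg_of_pos (tanh_nonneg hr.le) (mul_pos hr (sub_pos.2 (tanh_sq_lt_one r)))

theorem falkBruchSlope_antitoneOn : AntitoneOn falkBruchSlope (Set.Ioi 0) := by
  have hderiv (r : ℝ) (hr : 0 < r) := ((hasDerivAt_tanh r).sub
    (hasDerivAt_mul_one_sub_tanh_sq r)).div ((hasDerivAt_pow 2 r).mul
      ((hasDerivAt_tanh r).add (hasDerivAt_mul_one_sub_tanh_sq r)))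
    (mul_pos (pow_pos hr 2) (tanh_add_mul_one_sub_tanh_sq_pos hr)).ne'
  refine antitoneOn_of_hasDerivWithinAt_nonpos (convex_Ioi 0)
    (fun r hr => (hderiv r hr).continuousAt.continuousWithinAt)
    (fun r hr => (hderiv r (interior_subset hr)).hasDerivWithinAt) (fun r hr => ?_)
  replace hr : 0 < r := interior_subset hr
  have hwilker : 2 * r ^ 2 * (1 - tanh r ^ 2) ≤ tanh r ^ 2 + r * tanh r * (1 - tanh r ^ 2) := by
    have := (cosh_pos r).ne'
    have hsech : 1 - tanh r ^ 2 = 1 / cosh r ^ 2 := by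
      rw [tanh_eq_sinh_div_cosh]
      field_simp
      linarith [cosh_sq r]
    have htanh : tanh r ^ 2 = sinh r ^ 2 * (1 / cosh r ^ 2) := by
      rw [tanh_eq_sinh_div_cosh]
      field_simp
    rw [hsech, htanh, ← add_mul]
    exact mul_le_mul_of_nonneg_right (two_mul_sq_le_sinh_sq_add_mul_tanh hr.le) (by positivity)
  refine div_nonpos_of_nonpos_of_nonneg ?_ (sq_nonneg _)
  have := mul_nonneg hr.le (sub_nonneg.2 hwilker)
  norm_num
  linarith

theorem hasDerivAt_falkBruch_add_mul (s : ℝ) {r : ℝ} (hr : 0 < r) :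
    HasDerivAt (fun r => tanh r / r + s * (r * tanh r))
      ((tanh r + r * (1 - tanh r ^ 2)) * (s - falkBruchSlope r)) r := by
  refine (((hasDerivAt_tanh r).div (hasDerivAt_id r) hr.ne').add
    (((hasDerivAt_id r).mul (hasDerivAt_tanh r)).const_mul s)).congr_deriv ?_
  have hcancel : (tanh r + r * (1 - tanh r ^ 2)) * falkBruchSlope r =
      (tanh r - r * (1 - tanh r ^ 2)) / r ^ 2 := by
    rw [falkBruchSlope, mul_comm (r ^ 2), ← mul_div_assoc,
      mul_div_mul_left _ _ (tanh_add_mul_one_sub_tanh_sq_pos hr).ne']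
  rw [mul_sub (tanh r + _), hcancel]
  simp only [id]
  field_simp
  ring

theorem isBelowFalkBruch_curve {t : ℝ} (ht : 0 < t) :
    IsBelowFalkBruch (tanh t / t) (t * tanh t) := by
  have hweight (r : ℝ) (hr : 0 < r) := (tanh_add_mul_one_sub_tanh_sq_pos hr).le
  refine ⟨falkBruchSlope t, ?_, fun r hr => ?_⟩
  · have htanh : t * (1 - tanh t ^ 2) ≤ tanh t := by
      refine sub_nonneg.1 (nonneg_of_hasDerivAt_nonneg
        (f := fun t => tanh t - t * (1 - tanh t ^ 2))
        (fun y _ => (hasDerivAt_tanh y).sub (hasDerivAt_mul_one_sub_tanh_sq y))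
        (fun y _ => ?_) (by simp) ht.le)
      have := mul_nonneg (mul_tanh_nonneg y) (sub_pos.2 (tanh_sq_lt_one y)).le
      linarith
    exact div_nonneg (sub_nonneg.2 htanh) (mul_nonneg (sq_nonneg t) (hweight t ht))
  · have hmin := le_of_hasDerivAt_nonpos_of_nonneg
      (fun y hy => hasDerivAt_falkBruch_add_mul (falkBruchSlope t) hy)
      (fun y hy hyt => mul_nonpos_of_nonneg_of_nonpos (hweight y hy)
        (sub_nonpos.2 (falkBruchSlope_antitoneOn hy ht hyt)))
      (fun y hty => mul_nonneg (hweight y (ht.trans_le hty))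
        (sub_nonneg.2 (falkBruchSlope_antitoneOn ht (ht.trans_le hty) hty))) ht hr
    linarith

theorem isBelowFalkBruch_of_eq_on_curve {Φ : ℝ → ℝ}
    (hΦ : ∀ r, 0 < r → Φ (r * tanh r) = tanh r / r) (hΦ0 : Φ 0 = 1) {x : ℝ} (hx : 0 ≤ x) :
    IsBelowFalkBruch (Φ x) x := by
  obtain ⟨r, hr, rfl⟩ := exists_mul_tanh_eq hx
  rcases hr.eq_or_lt with rfl | hr
  · simpa only [zero_mul, hΦ0] using isBelowFalkBruch_one_zero
  · simpa only [hΦ r hr] using isBelowFalkBruch_curve hr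

/-- The logarithmic mean of `exp x` and `exp y`, written so that `x = y` needs no special case. -/
def expLogMean (x y : ℝ) : ℝ := ∫ u in (0 : ℝ)..1, exp (u * x + (1 - u) * y)

theorem expLogMean_nonneg (x y : ℝ) : 0 ≤ expLogMean x y :=
  intervalIntegral.integral_nonneg zero_le_one fun _ _ => (exp_pos _).le

theorem continuous_expLogMean_left (y : ℝ) : Continuous fun x => expLogMean x y := by
  apply intervalIntegral.continuous_parametric_intervalIntegral_of_continuous'
  simp only [Function.uncurry_def]
  fun_prop

theorem expLogMean_le (x y : ℝ) : expLogMean x y ≤ (exp x + exp y) / 2 := by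
  have hle (u : ℝ) (hu : u ∈ Set.Icc (0 : ℝ) 1) :
      exp (u * x + (1 - u) * y) ≤ u * (exp x - exp y) + exp y := by
    have := convexOn_exp.2 (Set.mem_univ x) (Set.mem_univ y) hu.1 (sub_nonneg.2 hu.2)
      (add_sub_cancel u 1)
    simp only [smul_eq_mul] at this
    linarith
  calc expLogMean x y
      ≤ ∫ u in (0 : ℝ)..1, (u * (exp x - exp y) + exp y) :=
        intervalIntegral.integral_mono_on zero_le_one
          (Continuous.intervalIntegrable (by fun_prop) _ _)
          (Continuous.intervalIntegrable (by fun_prop) _ _) hle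
    _ = (exp x + exp y) / 2 := by
        rw [intervalIntegral.integral_add (Continuous.intervalIntegrable (by fun_prop) _ _)
          (Continuous.intervalIntegrable (by fun_prop) _ _),
          intervalIntegral.integral_mul_const, integral_id, intervalIntegral.integral_const]
        norm_num
        ring

theorem expLogMean_of_ne {x y : ℝ} (hxy : x ≠ y) :
    expLogMean x y = (exp x - exp y) / (x - y) := by
  have hsub := sub_ne_zero.2 hxy
  have hderiv (u : ℝ) :
      HasDerivAt (fun u => exp (u * x + (1 - u) * y) / (x - y))
        (exp (u * x + (1 - u) * y)) u := by
    refine ((((hasDerivAt_id u).mul_const x).add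
      (((hasDerivAt_id u).const_sub 1).mul_const y)).exp.div_const (x - y)).congr_deriv ?_
    simp only [id, Pi.add_apply]
    field_simp
    ring
  rw [expLogMean, intervalIntegral.integral_eq_sub_of_hasDerivAt (fun u _ => hderiv u)
    (Continuous.intervalIntegrable (by fun_prop) _ _)]
  simp [sub_div]

theorem expLogMean_add_sub (m : ℝ) {r : ℝ} (hr : r ≠ 0) :
    expLogMean (m + r) (m - r) = exp m * (sinh r / r) := by
  have hne : m + r ≠ m - r := fun h => hr (by linarith)
  rw [expLogMean_of_ne hne, sinh_eq, add_sub_sub_cancel, sub_eq_add_neg m r, exp_add, exp_add]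
  field_simp
  norm_num

theorem le_expLogMean_of_support {φ x₀ s : ℝ}
    (hs : ∀ r, 0 < r → φ - s * (r * tanh r - x₀) ≤ tanh r / r) (x y : ℝ) :
    (φ + s * x₀) * ((exp x + exp y) / 2) - s / 4 * ((x - y) * (exp x - exp y)) ≤
      expLogMean x y := by
  have hcont : Continuous fun x =>
      (φ + s * x₀) * ((exp x + exp y) / 2) - s / 4 * ((x - y) * (exp x - exp y)) := by fun_prop
  refine (isClosed_le hcont (continuous_expLogMean_left y)).closure_subset_iff.2
    (fun x hxy => ?_) ((dense_compl_singleton y).closure_eq ▸ Set.mem_univ x)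
  obtain ⟨m, r, rfl, rfl⟩ : ∃ m r, x = m + r ∧ y = m - r :=
    ⟨(x + y) / 2, (x - y) / 2, by ring, by ring⟩
  have hr : r ≠ 0 := by
    rintro rfl
    exact hxy (by simp)
  have hline : φ - s * (r * tanh r - x₀) ≤ tanh r / r := by
    rcases hr.lt_or_gt with hneg | hpos
    · simpa using hs (-r) (neg_pos.2 hneg)
    · exact hs r hpos
  have hcosh := cosh_pos r
  have hscaled := mul_le_mul_of_nonneg_left hline (mul_pos (exp_pos m) hcosh).le
  have hplus : exp (m + r) = exp m * (cosh r + sinh r) := by rw [exp_add, cosh_add_sinh]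
  have hminus : exp (m - r) = exp m * (cosh r - sinh r) := by
    rw [sub_eq_add_neg, exp_add, cosh_sub_sinh]
  have hsinh : sinh r = tanh r * cosh r := by rw [tanh_eq_sinh_div_cosh]; field_simp
  rw [Set.mem_ofPred_eq, expLogMean_add_sub m hr, hplus, hminus, hsinh]
  calc _ = exp m * cosh r * (φ - s * (r * tanh r - x₀)) := by ring
    _ ≤ exp m * cosh r * (tanh r / r) := hscaled
    _ = exp m * (tanh r * cosh r / r) := by ring

end FalkBruchCurve

section SpectralSums

variable {n : Type*} [Fintype n] [DecidableEq n] {M B : Matrix n n ℂ}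

/-- The double eigenvalue sum `∑ i j, k (λ i) (λ j) * |⟨i|B|j⟩|²` over an eigenbasis of `M`, as a
linear functional of the kernel `k`. -/
def spectralSum (hM : M.IsHermitian) (B : Matrix n n ℂ) : (ℝ → ℝ → ℝ) →ₗ[ℝ] ℝ where
  toFun k := ∑ i, ∑ j, k (hM.eigenvalues i) (hM.eigenvalues j) *
    Complex.normSq (((hM.eigenvectorUnitary : Matrix n n ℂ)ᴴ * B * hM.eigenvectorUnitary) i j)
  map_add' k l := by simp only [Pi.add_apply, add_mul, Finset.sum_add_distrib]
  map_smul' c k := by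
    simp only [Pi.smul_apply, smul_eq_mul, mul_assoc, Finset.mul_sum, RingHom.id_apply]

theorem spectralSum_mono (hM : M.IsHermitian) {k l : ℝ → ℝ → ℝ} (hkl : ∀ x y, k x y ≤ l x y) :
    spectralSum hM B k ≤ spectralSum hM B l :=
  Finset.sum_le_sum fun _ _ => Finset.sum_le_sum fun _ _ =>
    mul_le_mul_of_nonneg_right (hkl _ _) (Complex.normSq_nonneg _)

theorem spectralSum_nonneg (hM : M.IsHermitian) {k : ℝ → ℝ → ℝ} (hk : ∀ x y, 0 ≤ k x y) :
    0 ≤ spectralSum hM B k :=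
  (map_zero (spectralSum hM B)).symm.le.trans (spectralSum_mono hM hk)

theorem spectralSum_swap (hM : M.IsHermitian) (hB : B.IsHermitian) (k : ℝ → ℝ → ℝ) :
    spectralSum hM B (fun x y => k y x) = spectralSum hM B k := by
  have hherm := isHermitian_conjTranspose_mul_mul
    (hM.eigenvectorUnitary : Matrix n n ℂ) hB
  refine Finset.sum_comm.trans (Finset.sum_congr rfl fun i _ => Finset.sum_congr rfl fun j _ => ?_)
  rw [← hherm.apply i j, Complex.star_def, Complex.normSq_conj]

theorem re_trace_cfc_mul_cfc_mul (hM : M.IsHermitian) (hB : B.IsHermitian) (f g : ℝ → ℝ) :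
    (cfc f M * B * cfc g M * B).trace.re = spectralSum hM B fun x y => f x * g y := by
  set U := (hM.eigenvectorUnitary : Matrix n n ℂ)
  set C := Uᴴ * B * U
  let D (h : ℝ → ℝ) : Matrix n n ℂ := diagonal fun i => (h (hM.eigenvalues i) : ℂ)
  have hherm (i j : n) : C j i = star (C i j) :=
    ((isHermitian_conjTranspose_mul_mul U hB).apply j i).symm
  have hcfc (h : ℝ → ℝ) : cfc h M = U * D h * Uᴴ := hM.cfc_eq h
  have htrace : (cfc f M * B * cfc g M * B).trace = (D f * C * (D g * C)).trace := by
    rw [hcfc f, hcfc g]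
    simp only [C, mul_assoc]
    rw [Matrix.trace_mul_comm]
    simp only [mul_assoc]
  rw [htrace, Matrix.trace, Complex.re_sum]
  refine Finset.sum_congr rfl fun i _ => ?_
  rw [Matrix.diag_apply, Matrix.mul_apply, Complex.re_sum]
  refine Finset.sum_congr rfl fun j _ => ?_
  have hentry : (D f * C) i j * (D g * C) j i =
      ((f (hM.eigenvalues i) * g (hM.eigenvalues j) * Complex.normSq (C i j) : ℝ) : ℂ) := by
    rw [Matrix.diagonal_mul, Matrix.diagonal_mul, hherm i j]
    push_cast
    rw [← Complex.mul_conj, Complex.star_def]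
    ring
  rw [hentry, Complex.ofReal_re]

theorem trace_cfc (hM : M.IsHermitian) (f : ℝ → ℝ) :
    (cfc f M).trace = ((∑ i, f (hM.eigenvalues i) : ℝ) : ℂ) := by
  rw [hM.cfc_eq, Matrix.IsHermitian.cfc, Unitary.conjStarAlgAut_apply, Matrix.trace_mul_cycle,
    Unitary.coe_star_mul_self, one_mul, Matrix.trace_diagonal, Complex.ofReal_sum]
  rfl

open scoped Matrix.Norms.Operator in
theorem exp_eq_cfc (hM : M.IsHermitian) : NormedSpace.exp M = cfc Real.exp M :=
  (@CFC.real_exp_eq_normedSpace_exp (Matrix n n ℂ) _ _ _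
    IsHermitian.instContinuousFunctionalCalculus M hM.isSelfAdjoint).symm

theorem exp_smul_eq_cfc (hM : M.IsHermitian) (s : ℝ) :
    NormedSpace.exp (s • M) = cfc (fun x => Real.exp (s * x)) M := by
  have hsM : (s • M).IsHermitian := hM.smul (.all s)
  rw [exp_eq_cfc hsM, cfc_comp_const_mul s Real.exp M]

theorem expTrace_mul_self_eq_spectralSum (hM : M.IsHermitian) (hB : B.IsHermitian) :
    expTrace M (B * B) = spectralSum hM B fun x _ => Real.exp x := by
  have h := re_trace_cfc_mul_cfc_mul hM hB Real.exp 1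
  rw [← exp_eq_cfc hM, cfc_one ℝ M hM.isSelfAdjoint, mul_one, mul_assoc] at h
  simpa only [expTrace_apply, Pi.one_apply, mul_one] using h

theorem expTrace_mul_mul_self_eq_spectralSum (hM : M.IsHermitian) (hB : B.IsHermitian) :
    expTrace M (M * (B * B)) = spectralSum hM B fun x _ => Real.exp x * x := by
  have h := re_trace_cfc_mul_cfc_mul hM hB (fun x => Real.exp x * x) 1
  rw [cfc_mul .., ← exp_eq_cfc hM, cfc_id' ℝ M hM.isSelfAdjoint, cfc_one ℝ M hM.isSelfAdjoint,
    mul_one] at h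
  simpa only [expTrace_apply, Pi.one_apply, mul_one, mul_assoc] using h

theorem expTrace_mul_mul_eq_spectralSum (hM : M.IsHermitian) (hB : B.IsHermitian) :
    expTrace M (B * M * B) = spectralSum hM B fun x y => Real.exp x * y := by
  have h := re_trace_cfc_mul_cfc_mul hM hB Real.exp fun y => y
  rw [← exp_eq_cfc hM, cfc_id' ℝ M hM.isSelfAdjoint] at h
  simpa only [expTrace_apply, mul_assoc] using h

theorem duhamel_self_eq_spectralSum (hM : M.IsHermitian) (hB : B.IsHermitian) :
    duhamel M B B = spectralSum hM B expLogMean := by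
  have hintegrand (s : ℝ) :
      (NormedSpace.exp (s • M) * B * NormedSpace.exp ((1 - s) • M) * B).trace.re =
        spectralSum hM B fun x y => Real.exp (s * x + (1 - s) * y) := by
    simp only [exp_smul_eq_cfc hM, re_trace_cfc_mul_cfc_mul hM hB, Real.exp_add]
  simp only [duhamel, hintegrand, spectralSum, expLogMean, LinearMap.coe_mk, AddHom.coe_mk]
  have hcont (c d w : ℝ) : Continuous fun s : ℝ => Real.exp (s * c + (1 - s) * d) * w := by
    fun_prop
  rw [intervalIntegral.integral_finsetSum fun i _ =>
    (continuous_finsetSum _ fun j _ => hcont _ _ _).intervalIntegrable _ _]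
  refine Finset.sum_congr rfl fun i _ => ?_
  rw [intervalIntegral.integral_finsetSum fun j _ => (hcont _ _ _).intervalIntegrable _ _]
  simp only [intervalIntegral.integral_mul_const]

theorem expTrace_one_pos [Nonempty n] (hM : M.IsHermitian) : 0 < expTrace M 1 := by
  rw [expTrace_apply, mul_one, exp_eq_cfc hM, trace_cfc hM, Complex.ofReal_re]
  exact Finset.sum_pos (fun i _ => Real.exp_pos _) Finset.univ_nonempty

theorem expTrace_mul_self_nonneg (hM : M.IsHermitian) (hB : B.IsHermitian) :
    0 ≤ expTrace M (B * B) :=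
  (spectralSum_nonneg hM fun x _ => (Real.exp_pos x).le).trans_eq
    (expTrace_mul_self_eq_spectralSum hM hB).symm

theorem abs_expTrace_le (hM : M.IsHermitian) (hB : B.IsHermitian) (hBB : B * B = 1) :
    |expTrace M B| ≤ expTrace M 1 := by
  have hplus := expTrace_mul_self_nonneg hM (isHermitian_one.add hB)
  have hminus := expTrace_mul_self_nonneg hM (isHermitian_one.sub hB)
  simp only [add_mul, mul_add, sub_mul, mul_sub, hBB, mul_one, one_mul, map_add, map_sub]
    at hplus hminus
  rw [abs_le]
  constructor <;> linarith

theorem duhamel_self_nonneg (hM : M.IsHermitian) (hB : B.IsHermitian) : 0 ≤ duhamel M B B :=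
  (spectralSum_nonneg hM expLogMean_nonneg).trans_eq (duhamel_self_eq_spectralSum hM hB).symm

theorem spectralSum_exp_add_exp (hM : M.IsHermitian) (hB : B.IsHermitian) :
    spectralSum hM B (fun x y => (Real.exp x + Real.exp y) / 2) = expTrace M (B * B) := by
  have hsplit : (fun x y => (Real.exp x + Real.exp y) / 2) =
      (1 / 2 : ℝ) • ((fun x _ => Real.exp x) + fun _ y => Real.exp y) := by
    ext x y
    simp only [Pi.smul_apply, Pi.add_apply, smul_eq_mul]
    ring
  rw [hsplit, map_smul, map_add, spectralSum_swap hM hB fun x _ => Real.exp x,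
    expTrace_mul_self_eq_spectralSum hM hB, smul_eq_mul]
  ring

theorem duhamel_self_le (hM : M.IsHermitian) (hB : B.IsHermitian) :
    duhamel M B B ≤ expTrace M (B * B) :=
  calc duhamel M B B = spectralSum hM B expLogMean := duhamel_self_eq_spectralSum hM hB
    _ ≤ spectralSum hM B fun x y => (Real.exp x + Real.exp y) / 2 :=
      spectralSum_mono hM expLogMean_le
    _ = expTrace M (B * B) := spectralSum_exp_add_exp hM hB

theorem spectralSum_sub_mul_exp_sub_exp (hM : M.IsHermitian) (hB : B.IsHermitian) :
    spectralSum hM B (fun x y => (x - y) * (Real.exp x - Real.exp y)) =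
      2 * (expTrace M (M * (B * B)) - expTrace M (B * M * B)) := by
  have hsplit : (fun x y => (x - y) * (Real.exp x - Real.exp y)) =
      (((fun x _ => Real.exp x * x) + fun _ y => Real.exp y * y) -
        ((fun x y => Real.exp x * y) + fun x y => Real.exp y * x) : ℝ → ℝ → ℝ) := by
    ext x y
    simp only [Pi.sub_apply, Pi.add_apply]
    ring
  rw [hsplit, map_sub, map_add, map_add, spectralSum_swap hM hB fun x _ => Real.exp x * x,
    spectralSum_swap hM hB fun x y => Real.exp x * y, expTrace_mul_mul_self_eq_spectralSum hM hB,
    expTrace_mul_mul_eq_spectralSum hM hB]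
  ring

/-- The Falk–Bruch inequality, a lower bound on the Duhamel self-pairing of `B`; the hypothesis
bounds half the thermal average of the double commutator `[B, [B, M]]`. -/
theorem mul_expTrace_mul_self_le_duhamel_self {φ x₀ : ℝ} (hφ : IsBelowFalkBruch φ x₀)
    (hM : M.IsHermitian) (hB : B.IsHermitian)
    (hcomm : expTrace M (M * (B * B)) - expTrace M (B * M * B) ≤ 2 * x₀ * expTrace M (B * B)) :
    φ * expTrace M (B * B) ≤ duhamel M B B := by
  obtain ⟨s, hs, hline⟩ := hφ
  have hsplit : (fun x y => (φ + s * x₀) * ((Real.exp x + Real.exp y) / 2) -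
      s / 4 * ((x - y) * (Real.exp x - Real.exp y))) =
      (φ + s * x₀) • (fun x y => (Real.exp x + Real.exp y) / 2) -
      (s / 4) • (fun x y => (x - y) * (Real.exp x - Real.exp y)) := rfl
  have hlower := spectralSum_mono (B := B) hM (le_expLogMean_of_support hline)
  rw [hsplit, map_sub, map_smul, map_smul, spectralSum_exp_add_exp hM hB,
    spectralSum_sub_mul_exp_sub_exp hM hB, ← duhamel_self_eq_spectralSum hM hB, smul_eq_mul,
    smul_eq_mul] at hlower
  have := mul_le_mul_of_nonneg_left hcomm hs
  linarith

end SpectralSums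

section ThermalAverages

variable {n : Type*} [Fintype n] [DecidableEq n] {M A B X V : Matrix n n ℂ}

theorem gibbs_eq_thermalAvg {H : Matrix n n ℂ} (hH : H.IsHermitian) (β : ℝ) (A : Matrix n n ℂ) :
    gibbs β H A = thermalAvg ((-β) • H) A := by
  have hM := hH.smul (.all (-β))
  have hreal : (NormedSpace.exp ((-β) • H)).trace = (expTrace ((-β) • H) 1 : ℂ) := by
    rw [expTrace_apply, mul_one, exp_eq_cfc hM, trace_cfc hM, Complex.ofReal_re]
  rw [gibbs, hreal, Complex.div_ofReal_re, thermalAvg, expTrace_apply _ A]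

theorem abs_thermalAvg_le_one [Nonempty n] (hM : M.IsHermitian) (hB : B.IsHermitian)
    (hBB : B * B = 1) : |thermalAvg M B| ≤ 1 := by
  have hZ := expTrace_one_pos hM
  rw [thermalAvg, abs_div, abs_of_pos hZ, div_le_one hZ]
  exact abs_expTrace_le hM hB hBB

theorem duhamelCorr_nonneg [Nonempty n] (hM : M.IsHermitian) (hB : B.IsHermitian) :
    0 ≤ duhamelCorr M B :=
  div_nonneg (duhamel_self_nonneg hM hB) (expTrace_one_pos hM).le

theorem duhamelCorr_le_one [Nonempty n] (hM : M.IsHermitian) (hB : B.IsHermitian)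
    (hBB : B * B = 1) : duhamelCorr M B ≤ 1 := by
  rw [duhamelCorr, div_le_one (expTrace_one_pos hM), ← hBB]
  exact duhamel_self_le hM hB

theorem le_duhamelCorr [Nonempty n] {φ x₀ : ℝ} (hφ : IsBelowFalkBruch φ x₀)
    (hM : M.IsHermitian) (hB : B.IsHermitian) (hBB : B * B = 1)
    (hcomm : thermalAvg M (M - B * M * B) ≤ 2 * x₀) : φ ≤ duhamelCorr M B := by
  have hZ := expTrace_one_pos hM
  rw [thermalAvg, div_le_iff₀ hZ, map_sub] at hcomm
  rw [duhamelCorr, le_div_iff₀ hZ]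
  simpa only [hBB, mul_one] using mul_expTrace_mul_self_le_duhamel_self hφ hM hB
    (by simpa only [hBB, mul_one] using hcomm)

theorem expTrace_eq_zero_of_anticommute (hV : IsUnit V) (hVA : Commute V A)
    (hVX : V * X = -(X * V)) : expTrace A X = 0 := by
  obtain ⟨U, rfl⟩ := hV
  have hexp : (U : Matrix n n ℂ) * NormedSpace.exp A = NormedSpace.exp A * U := hVA.exp_right.eq
  have hneg : (NormedSpace.exp A * X).trace = -(NormedSpace.exp A * X).trace :=
    calc (NormedSpace.exp A * X).trace
        = ((U⁻¹ : (Matrix n n ℂ)ˣ) * (U * NormedSpace.exp A * X) : Matrix n n ℂ).trace := by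
          rw [mul_assoc (U : Matrix n n ℂ), Units.inv_mul_cancel_left]
      _ = (NormedSpace.exp A * (U * X) * (U⁻¹ : (Matrix n n ℂ)ˣ) : Matrix n n ℂ).trace := by
          rw [hexp, Matrix.trace_mul_comm, mul_assoc (NormedSpace.exp A)]
      _ = -(NormedSpace.exp A * X).trace := by
          rw [hVX, mul_neg, neg_mul, Matrix.trace_neg, ← mul_assoc, Units.mul_inv_cancel_right]
  rw [expTrace_apply, self_eq_neg.1 hneg, Complex.zero_re]

theorem expTrace_add_smul_mul_cosh_le (hA : A.IsHermitian) (hX : X.IsHermitian)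
    (hXX : X * X = 1) (h0 : expTrace A X = 0) {t : ℝ} (ht : 0 ≤ t) :
    expTrace (A + t • X) X * Real.cosh t ≤ expTrace (A + t • X) 1 * Real.sinh t := by
  refine sub_nonneg.1 (nonneg_of_hasDerivAt_nonneg
    (f := fun t => expTrace (A + t • X) 1 * Real.sinh t - expTrace (A + t • X) X * Real.cosh t)
    (fun s _ => ((hasDerivAt_expTrace_one A X s).mul (Real.hasDerivAt_sinh s)).sub
      ((hasDerivAt_expTrace A X X s).mul (Real.hasDerivAt_cosh s))) (fun s _ => ?_)
    (by simp [h0]) ht)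
  have hduhamel := duhamel_self_le (hA.add (hX.smul (.all s))) hX
  rw [hXX] at hduhamel
  have := mul_le_mul_of_nonneg_right hduhamel (Real.cosh_pos s).le
  linarith

theorem mul_thermalAvg_add_smul_le [Nonempty n] (hA : A.IsHermitian) (hX : X.IsHermitian)
    (hXX : X * X = 1) (h0 : expTrace A X = 0) (t : ℝ) :
    t * thermalAvg (A + t • X) X ≤ t * Real.tanh t := by
  wlog ht : 0 ≤ t generalizing X t
  · have h := this hX.neg (by rw [neg_mul_neg, hXX]) (by rw [map_neg, h0, neg_zero]) (-t)
      (by linarith)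
    simpa only [neg_smul_neg, thermalAvg, map_neg, neg_div, neg_mul_neg, Real.tanh_neg] using h
  have hZ := expTrace_one_pos (hA.add (hX.smul (.all t)))
  refine mul_le_mul_of_nonneg_left ?_ ht
  rw [thermalAvg, Real.tanh_eq_sinh_div_cosh, div_le_div_iff₀ hZ (Real.cosh_pos t),
    mul_comm (Real.sinh t)]
  exact expTrace_add_smul_mul_cosh_le hA hX hXX h0 ht

end ThermalAverages

section GaussianIntegrationByParts

open scoped NNReal

theorem hasDerivAt_gaussianPDFReal (m : ℝ) (v : ℝ≥0) (x : ℝ) :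
    HasDerivAt (gaussianPDFReal m v) (-((x - m) / v) * gaussianPDFReal m v x) x := by
  have hexponent : HasDerivAt (fun x : ℝ => -(x - m) ^ 2 / (2 * (v : ℝ))) (-((x - m) / v)) x :=
    (((((hasDerivAt_id x).sub_const m).pow 2).neg).div_const _).congr_deriv (by
      simp only [id, Nat.cast_ofNat]; ring)
  rw [gaussianPDFReal_def]
  exact (hexponent.exp.const_mul _).congr_deriv (by ring)

theorem integrable_gaussianReal_iff {m : ℝ} {v : ℝ≥0} (hv : v ≠ 0) {f : ℝ → ℝ} :
    Integrable f (gaussianReal m v) ↔ Integrable (fun x => f x * gaussianPDFReal m v x) := by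
  simp only [gaussianReal_of_var_ne_zero m hv,
    integrable_withDensity_iff (measurable_gaussianPDF m v)
      (.of_forall fun _ => gaussianPDF_lt_top), toReal_gaussianPDF]

theorem integral_sub_mul_gaussianReal {m : ℝ} {v : ℝ≥0} {f f' : ℝ → ℝ}
    (hderiv : ∀ x, HasDerivAt f (f' x) x) (hf : Integrable f (gaussianReal m v))
    (hf' : Integrable f' (gaussianReal m v))
    (hxf : Integrable (fun x => (x - m) * f x) (gaussianReal m v)) :
    ∫ x, (x - m) * f x ∂(gaussianReal m v) = v * ∫ x, f' x ∂(gaussianReal m v) := by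
  rcases eq_or_ne v 0 with rfl | hv
  · simp
  have hv' : (v : ℝ) ≠ 0 := NNReal.coe_ne_zero.2 hv
  rw [integrable_gaussianReal_iff hv] at hf hf' hxf
  have hscale (x : ℝ) : (x - m) * f x * gaussianPDFReal m v x =
      -v * (f x * (-((x - m) / v) * gaussianPDFReal m v x)) := by field_simp
  have hparts := integral_mul_deriv_eq_deriv_mul_of_integrable (fun x _ => hderiv x)
    (fun x _ => hasDerivAt_gaussianPDFReal m v x)
    ((integrable_const_mul_iff (IsUnit.mk0 _ (neg_ne_zero.2 hv')) _).1
      (by simpa only [Pi.mul_apply, hscale] using hxf)) hf' hf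
  simp only [integral_gaussianReal_eq_integral_smul hv, smul_eq_mul,
    mul_comm (gaussianPDFReal m v _), hscale, integral_const_mul]
  rw [hparts, neg_mul_neg]

theorem integrable_apply_of_hasLaw_pi_gaussianReal {ι Ω : Type*} [Fintype ι] [MeasurableSpace Ω]
    {P : Measure Ω} {m : ι → ℝ} {v : ι → ℝ≥0} {Y : Ω → ι → ℝ}
    (hY : HasLaw Y (Measure.pi fun j => gaussianReal (m j) (v j)) P) (i : ι) :
    Integrable (fun ω => Y ω i) P := by
  have hcoord : Integrable (fun y : ι → ℝ => y i)
      (Measure.pi fun j => gaussianReal (m j) (v j)) :=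
    (measurePreserving_eval (fun j => gaussianReal (m j) (v j)) i).integrable_comp_of_integrable
      (g := id) ((memLp_id_gaussianReal 1).integrable le_rfl)
  exact (hY.map_eq ▸ hcoord).comp_aemeasurable hY.aemeasurable

variable {ι : Type*} [Fintype ι] [DecidableEq ι]

theorem measurePreserving_update {α : ι → Type*} [∀ i, MeasurableSpace (α i)]
    (ν : ∀ i, Measure (α i)) [∀ i, IsProbabilityMeasure (ν i)] (i : ι) :
    MeasurePreserving (fun p : (∀ j, α j) × α i => Function.update p.1 i p.2)
      ((Measure.pi ν).prod (ν i)) (Measure.pi ν) := by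
  refine ⟨measurable_update', (Measure.pi_eq fun s hs => ?_).symm⟩
  have hpreimage : (fun p : (∀ j, α j) × α i => Function.update p.1 i p.2) ⁻¹' Set.univ.pi s =
      Set.univ.pi (Function.update s i Set.univ) ×ˢ s i := by
    ext p
    simp only [Set.mem_preimage, Set.mem_univ_pi, Set.mem_prod]
    rw [Function.forall_update_iff p.1 (p := fun j x => x ∈ s j),
      Function.forall_update_iff s (p := fun j t => p.1 j ∈ t)]
    simp only [Set.mem_univ, true_and, and_comm]
  rw [Measure.map_apply measurable_update' (.univ_pi hs), hpreimage, Measure.prod_prod,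
    Measure.pi_pi, ← Finset.prod_erase_mul _ _ (Finset.mem_univ i),
    ← Finset.prod_erase_mul (a := i) _ _ (Finset.mem_univ i), Function.update_self, measure_univ,
    mul_one]
  congr 1
  refine Finset.prod_congr rfl fun j hj => ?_
  rw [Function.update_of_ne (Finset.ne_of_mem_erase hj)]

theorem integral_pi_eq_integral_integral_update {α : ι → Type*} [∀ i, MeasurableSpace (α i)]
    {ν : ∀ i, Measure (α i)} [∀ i, IsProbabilityMeasure (ν i)] {E : Type*}
    [NormedAddCommGroup E] [NormedSpace ℝ E] {G : (∀ i, α i) → E}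
    (hG : Integrable G (Measure.pi ν)) (i : ι) :
    ∫ y, G y ∂(Measure.pi ν) =
      ∫ y, ∫ x, G (Function.update y i x) ∂(ν i) ∂(Measure.pi ν) := by
  have hupdate := measurePreserving_update ν i
  have hstrong := hG.aestronglyMeasurable
  rw [← hupdate.map_eq] at hstrong
  calc ∫ y, G y ∂(Measure.pi ν)
      = ∫ p, G (Function.update p.1 i p.2) ∂((Measure.pi ν).prod (ν i)) := by
        rw [← integral_map hupdate.aemeasurable hstrong, hupdate.map_eq]
    _ = ∫ y, ∫ x, G (Function.update y i x) ∂(ν i) ∂(Measure.pi ν) :=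
        integral_prod _ (hupdate.integrable_comp_of_integrable hG)

theorem integral_sub_mul_pi_gaussianReal {m : ι → ℝ} {v : ι → ℝ≥0} {i : ι} {F F' : (ι → ℝ) → ℝ}
    (hderiv : ∀ y, HasDerivAt (fun x => F (Function.update y i x)) (F' y) (y i))
    (hF : Integrable F (Measure.pi fun j => gaussianReal (m j) (v j)))
    (hF' : Integrable F' (Measure.pi fun j => gaussianReal (m j) (v j)))
    (hyF : Integrable (fun y => (y i - m i) * F y)
      (Measure.pi fun j => gaussianReal (m j) (v j))) :
    ∫ y, (y i - m i) * F y ∂(Measure.pi fun j => gaussianReal (m j) (v j)) =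
      v i * ∫ y, F' y ∂(Measure.pi fun j => gaussianReal (m j) (v j)) := by
  have hsections {G : (ι → ℝ) → ℝ}
      (hG : Integrable G (Measure.pi fun j => gaussianReal (m j) (v j))) :=
    ((measurePreserving_update (fun j => gaussianReal (m j) (v j)) i).integrable_comp_of_integrable
      hG).prod_right_ae
  rw [integral_pi_eq_integral_integral_update hyF i, integral_pi_eq_integral_integral_update hF' i,
    ← integral_const_mul]
  refine integral_congr_ae ?_
  filter_upwards [hsections hF, hsections hF', hsections hyF] with y hFy hFy' hyFy
  simp only [Function.comp_apply, Function.update_self] at hFy hFy' hyFy ⊢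
  refine integral_sub_mul_gaussianReal (fun x => ?_) hFy hFy' hyFy
  simpa only [Function.update_idem, Function.update_self] using hderiv (Function.update y i x)

theorem integral_sub_mul_of_hasLaw_pi_gaussianReal {Ω : Type*} [MeasurableSpace Ω] {P : Measure Ω}
    {m : ι → ℝ} {v : ι → ℝ≥0} {Y : Ω → ι → ℝ} {i : ι} {F F' : (ι → ℝ) → ℝ}
    (hY : HasLaw Y (Measure.pi fun j => gaussianReal (m j) (v j)) P)
    (hderiv : ∀ y, HasDerivAt (fun x => F (Function.update y i x)) (F' y) (y i))
    (hF : Integrable F (Measure.pi fun j => gaussianReal (m j) (v j)))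
    (hF' : Integrable F' (Measure.pi fun j => gaussianReal (m j) (v j)))
    (hyF : Integrable (fun y => (y i - m i) * F y)
      (Measure.pi fun j => gaussianReal (m j) (v j))) :
    ∫ ω, (Y ω i - m i) * F (Y ω) ∂P = v i * ∫ ω, F' (Y ω) ∂P :=
  (hY.integral_comp hyF.aestronglyMeasurable).trans <|
    (integral_sub_mul_pi_gaussianReal hderiv hF hF' hyF).trans <|
      congrArg _ (hY.integral_comp hF'.aestronglyMeasurable).symm

end GaussianIntegrationByParts

section DisorderedModels

open scoped NNReal

variable {ι n : Type*} [Fintype ι] {M₀ : Matrix n n ℂ} {C : ι → Matrix n n ℂ}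

/-- The exponent `M₀ + c ∑ₚ yₚ Cₚ` of the Gibbs weight of a model whose interactions `C p` carry
the random couplings `y p`; it stands for `-βH`, so that `c` contains the inverse temperature. -/
def disordered (M₀ : Matrix n n ℂ) (c : ℝ) (C : ι → Matrix n n ℂ) (y : ι → ℝ) : Matrix n n ℂ :=
  M₀ + c • ∑ p, y p • C p

theorem isHermitian_disordered (hM₀ : M₀.IsHermitian) (hC : ∀ p, (C p).IsHermitian) (c : ℝ)
    (y : ι → ℝ) : (disordered M₀ c C y).IsHermitian :=
  hM₀.add (IsSelfAdjoint.smul (.all c) (isSelfAdjoint_sum _ fun p _ => (hC p).smul (.all (y p))))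

theorem continuous_disordered (M₀ : Matrix n n ℂ) (c : ℝ) (C : ι → Matrix n n ℂ) :
    Continuous (disordered M₀ c C) := by
  unfold disordered
  fun_prop

theorem disordered_update [DecidableEq ι] (M₀ : Matrix n n ℂ) (c : ℝ) (C : ι → Matrix n n ℂ)
    (y : ι → ℝ) (p : ι) (x : ℝ) :
    disordered M₀ c C (Function.update y p x) =
      disordered M₀ c C y + (c * (x - y p)) • C p := by
  have hsum : ∑ q, Function.update y p x q • C q = ∑ q, y q • C q + (x - y p) • C p := by
    rw [← sub_eq_iff_eq_add', ← Finset.sum_sub_distrib, Fintype.sum_eq_single p fun q hq => by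
      rw [Function.update_of_ne hq, sub_self], Function.update_self, sub_smul]
  rw [disordered, disordered, hsum, smul_add, smul_smul, add_assoc]

variable [Fintype n] [DecidableEq n] [Nonempty n]

theorem hasDerivAt_thermalAvg_disordered [DecidableEq ι] (hM₀ : M₀.IsHermitian)
    (hC : ∀ p, (C p).IsHermitian) (c : ℝ) (p : ι) (y : ι → ℝ) :
    HasDerivAt (fun x => thermalAvg (disordered M₀ c C (Function.update y p x)) (C p))
      (c * (duhamelCorr (disordered M₀ c C y) (C p) -
        thermalAvg (disordered M₀ c C y) (C p) ^ 2)) (y p) := by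
  have hZ := (expTrace_one_pos (isHermitian_disordered hM₀ hC c y)).ne'
  have hinner : HasDerivAt (fun x => c * (x - y p)) c (y p) :=
    (((hasDerivAt_id _).sub_const _).const_mul c).congr_deriv (mul_one c)
  have hzero : c * (y p - y p) = 0 := by rw [sub_self, mul_zero]
  have houter := hasDerivAt_thermalAvg (M := disordered M₀ c C y) (A := C p) (t := c * (y p - y p))
    (by rwa [hzero, zero_smul, add_zero])
  simp only [disordered_update]
  refine (houter.comp (y p) hinner).congr_deriv ?_
  rw [hzero, zero_smul, add_zero, mul_comm]

theorem continuous_thermalAvg_disordered (hM₀ : M₀.IsHermitian) (hC : ∀ p, (C p).IsHermitian)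
    (c : ℝ) (A : Matrix n n ℂ) : Continuous fun y => thermalAvg (disordered M₀ c C y) A :=
  ((continuous_expTrace A).comp (continuous_disordered M₀ c C)).div
    ((continuous_expTrace 1).comp (continuous_disordered M₀ c C))
    fun y => (expTrace_one_pos (isHermitian_disordered hM₀ hC c y)).ne'

theorem continuous_duhamelCorr_disordered (hM₀ : M₀.IsHermitian) (hC : ∀ p, (C p).IsHermitian)
    (c : ℝ) (A : Matrix n n ℂ) : Continuous fun y => duhamelCorr (disordered M₀ c C y) A :=
  ((continuous_duhamel A A).comp (continuous_disordered M₀ c C)).div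
    ((continuous_expTrace 1).comp (continuous_disordered M₀ c C))
    fun y => (expTrace_one_pos (isHermitian_disordered hM₀ hC c y)).ne'

variable {Ω : Type*} [MeasurableSpace Ω] {P : Measure Ω} {Y : Ω → ι → ℝ}

theorem integrable_thermalAvg_sq_disordered [IsFiniteMeasure P] (hY : AEMeasurable Y P)
    (hM₀ : M₀.IsHermitian) (hC : ∀ p, (C p).IsHermitian) (c : ℝ) {A : Matrix n n ℂ}
    (hA : A.IsHermitian) (hAA : A * A = 1) :
    Integrable (fun ω => thermalAvg (disordered M₀ c C (Y ω)) A ^ 2) P :=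
  .of_bound (((continuous_thermalAvg_disordered hM₀ hC c A).pow 2).comp_aestronglyMeasurable
    hY.aestronglyMeasurable) 1 (.of_forall fun ω => by
      rw [norm_pow, Real.norm_eq_abs]
      exact pow_le_one₀ (abs_nonneg _)
        (abs_thermalAvg_le_one (isHermitian_disordered hM₀ hC c (Y ω)) hA hAA))

theorem integrable_duhamelCorr_disordered [IsFiniteMeasure P] (hY : AEMeasurable Y P)
    (hM₀ : M₀.IsHermitian) (hC : ∀ p, (C p).IsHermitian) (c : ℝ) {A : Matrix n n ℂ}
    (hA : A.IsHermitian) (hAA : A * A = 1) :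
    Integrable (fun ω => duhamelCorr (disordered M₀ c C (Y ω)) A) P :=
  .of_bound ((continuous_duhamelCorr_disordered hM₀ hC c A).comp_aestronglyMeasurable
    hY.aestronglyMeasurable) 1 (.of_forall fun ω => by
      have hM := isHermitian_disordered hM₀ hC c (Y ω)
      rw [Real.norm_of_nonneg (duhamelCorr_nonneg hM hA)]
      exact duhamelCorr_le_one hM hA hAA)

theorem integrable_mul_thermalAvg_disordered {f : Ω → ℝ} (hf : Integrable f P)
    (hY : AEMeasurable Y P) (hM₀ : M₀.IsHermitian) (hC : ∀ p, (C p).IsHermitian) (c : ℝ)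
    {A : Matrix n n ℂ} (hA : A.IsHermitian) (hAA : A * A = 1) :
    Integrable (fun ω => f ω * thermalAvg (disordered M₀ c C (Y ω)) A) P :=
  hf.mul_bdd (c := 1) ((continuous_thermalAvg_disordered hM₀ hC c A).comp_aestronglyMeasurable
    hY.aestronglyMeasurable) (.of_forall fun ω =>
      abs_thermalAvg_le_one (isHermitian_disordered hM₀ hC c (Y ω)) hA hAA)

theorem integral_sub_mul_thermalAvg_disordered {m : ι → ℝ} {v : ι → ℝ≥0}
    (hY : HasLaw Y (Measure.pi fun q => gaussianReal (m q) (v q)) P) (hM₀ : M₀.IsHermitian)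
    (hC : ∀ p, (C p).IsHermitian) (hCC : ∀ p, C p * C p = 1) (c : ℝ) (p : ι) :
    ∫ ω, (Y ω p - m p) * thermalAvg (disordered M₀ c C (Y ω)) (C p) ∂P =
      v p * (c * (∫ ω, duhamelCorr (disordered M₀ c C (Y ω)) (C p) ∂P -
        ∫ ω, thermalAvg (disordered M₀ c C (Y ω)) (C p) ^ 2 ∂P)) := by
  classical
  have := hY.isProbabilityMeasure
  have hbounded := integrable_mul_thermalAvg_disordered (integrable_const 1) aemeasurable_id
    hM₀ hC c (hC p) (hCC p) (P := Measure.pi fun q => gaussianReal (m q) (v q))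
  simp only [one_mul] at hbounded
  have hparts := integral_sub_mul_of_hasLaw_pi_gaussianReal hY
    (hasDerivAt_thermalAvg_disordered hM₀ hC c p) hbounded
    (((integrable_duhamelCorr_disordered aemeasurable_id hM₀ hC c (hC p) (hCC p)).sub
      (integrable_thermalAvg_sq_disordered aemeasurable_id hM₀ hC c (hC p) (hCC p))).const_mul c)
    (integrable_mul_thermalAvg_disordered
      ((integrable_apply_of_hasLaw_pi_gaussianReal .id p).sub (integrable_const (m p)))
      aemeasurable_id hM₀ hC c (hC p) (hCC p))
  simp only [id, Pi.sub_apply, integral_const_mul] at hparts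
  rwa [integral_sub
    (integrable_duhamelCorr_disordered hY.aemeasurable hM₀ hC c (hC p) (hCC p))
    (integrable_thermalAvg_sq_disordered hY.aemeasurable hM₀ hC c (hC p) (hCC p))] at hparts

end DisorderedModels

section SpinOperators

variable {N : ℕ}

theorem isHermitian_Sz (j : Fin N) : (Sz N j).IsHermitian :=
  Matrix.isHermitian_diagonal_of_self_adjoint _ (funext fun σ => by
    by_cases h : σ j = 0 <;> simp [h])

theorem Sz_mul_self (j : Fin N) : Sz N j * Sz N j = 1 := by
  rw [Sz, Matrix.diagonal_mul_diagonal, ← Matrix.diagonal_one]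
  congr 1 with σ
  split_ifs <;> norm_num

theorem commute_Sz (j k : Fin N) : Commute (Sz N j) (Sz N k) :=
  Matrix.commute_diagonal _ _

theorem update_one_sub_involutive (j : Fin N) :
    Function.Involutive fun σ : Conf N => Function.update σ j (1 - σ j) := fun σ => by
  have hflip : ∀ a : Fin 2, 1 - (1 - a) = a := by decide
  simp only [Function.update_self, Function.update_idem, hflip, Function.update_eq_self]

theorem isHermitian_Sx (j : Fin N) : (Sx N j).IsHermitian := by
  ext σ τ
  have hsymm : (σ = Function.update τ j (1 - τ j)) = (τ = Function.update σ j (1 - σ j)) :=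
    propext ((update_one_sub_involutive j).eq_iff.symm.trans eq_comm)
  simp [Sx, Matrix.conjTranspose_apply, hsymm, apply_ite]

theorem Sx_mul_self (j : Fin N) : Sx N j * Sx N j = 1 := by
  ext σ τ
  have hflip := update_one_sub_involutive j σ
  simp only at hflip
  simp only [Sx, Matrix.mul_apply, Matrix.of_apply, Matrix.one_apply, ite_mul, one_mul, zero_mul,
    Finset.sum_ite_eq', Finset.mem_univ, if_true, hflip, eq_comm]

theorem Sz_mul_Sx_self (j : Fin N) : Sz N j * Sx N j = -(Sx N j * Sz N j) := by
  have hflip : ∀ a : Fin 2, (if a = 0 then (1 : ℂ) else -1) = -(if 1 - a = 0 then 1 else -1) := by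
    simp [Fin.forall_fin_two]
  ext σ τ
  simp only [Sz, Sx, Matrix.mul_diagonal, Matrix.diagonal_mul, Matrix.of_apply, Matrix.neg_apply]
  by_cases hτ : τ = Function.update σ j (1 - σ j)
  · rw [if_pos hτ, hτ, Function.update_self, mul_one, one_mul, hflip]
  · rw [if_neg hτ, mul_zero, zero_mul, neg_zero]

theorem commute_Sz_Sx {j k : Fin N} (hjk : j ≠ k) : Commute (Sz N j) (Sx N k) := by
  ext σ τ
  simp only [Sz, Sx, Matrix.mul_diagonal, Matrix.diagonal_mul, Matrix.of_apply]
  by_cases hτ : τ = Function.update σ k (1 - σ k)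
  · rw [if_pos hτ, hτ, Function.update_of_ne hjk, mul_comm]
  · rw [if_neg hτ, mul_zero, zero_mul]

end SpinOperators

section PairOperators

variable {N : ℕ}

/-- The unordered pairs of distinct sites, encoded as increasing pairs. -/
abbrev Pairs (N : ℕ) := {q : Fin N × Fin N // q.1 < q.2}

theorem sum_sum_ite_lt_eq_sum_pairs {E : Type*} [AddCommMonoid E] (F : Fin N → Fin N → E) :
    (∑ j, ∑ k, if j < k then F j k else 0) = ∑ p : Pairs N, F p.1.1 p.1.2 := by
  rw [← Finset.sum_product', Finset.univ_product_univ, ← Finset.sum_filter]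
  exact Finset.sum_subtype _ (by simp) _

theorem card_pairs (N : ℕ) : Fintype.card (Pairs N) = N.choose 2 := by
  rw [Fintype.card_eq_sum_ones, ← sum_sum_ite_lt_eq_sum_pairs fun _ _ => 1, Finset.sum_comm]
  simp only [Finset.sum_boole, Finset.filter_gt_eq_Iio, Fin.card_Iio, Nat.cast_id]
  rw [Fin.sum_univ_eq_sum_range fun k => k, Finset.sum_range_id, Nat.choose_two_right]

/-- The interaction `S_j^z S_k^z` of the pair `p = (j, k)`. -/
def SzSz (p : Pairs N) : Matrix (Conf N) (Conf N) ℂ := Sz N p.1.1 * Sz N p.1.2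

theorem isHermitian_SzSz (p : Pairs N) : (SzSz p).IsHermitian :=
  (isHermitian_Sz _).commute_iff (isHermitian_Sz _) |>.1 (commute_Sz _ _)

theorem SzSz_mul_self (p : Pairs N) : SzSz p * SzSz p = 1 := by
  rw [SzSz, (commute_Sz p.1.2 p.1.1).mul_mul_mul_comm, Sz_mul_self, Sz_mul_self, one_mul]

theorem commute_Sz_SzSz (j : Fin N) (p : Pairs N) : Commute (Sz N j) (SzSz p) :=
  (commute_Sz _ _).mul_right (commute_Sz _ _)

theorem commute_SzSz (p q : Pairs N) : Commute (SzSz p) (SzSz q) :=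
  (commute_Sz_SzSz _ _).mul_left (commute_Sz_SzSz _ _)

theorem SzSz_mul_Sx_fst (p : Pairs N) : SzSz p * Sx N p.1.1 = -(Sx N p.1.1 * SzSz p) := by
  rw [SzSz, mul_assoc, (commute_Sz_Sx p.2.ne').eq, ← mul_assoc, Sz_mul_Sx_self, neg_mul, mul_assoc]

theorem SzSz_mul_Sx_snd (p : Pairs N) : SzSz p * Sx N p.1.2 = -(Sx N p.1.2 * SzSz p) := by
  rw [SzSz, mul_assoc, Sz_mul_Sx_self, mul_neg, ← mul_assoc, (commute_Sz_Sx p.2.ne).eq, mul_assoc]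

theorem commute_SzSz_Sx {p : Pairs N} {k : Fin N} (hk₁ : k ≠ p.1.1) (hk₂ : k ≠ p.1.2) :
    Commute (SzSz p) (Sx N k) :=
  (commute_Sz_Sx hk₁.symm).mul_left (commute_Sz_Sx hk₂.symm)

end PairOperators

section Conjugation

variable {R : Type*} [Ring R] {a b : R}

theorem conj_eq_of_commute (hb : b * b = 1) (hab : Commute b a) : b * a * b = a := by
  rw [hab.eq, mul_assoc, hb, mul_one]

theorem conj_eq_neg_of_anticommute (hb : b * b = 1) (hab : b * a = -(a * b)) :
    b * a * b = -a := by
  rw [hab, neg_mul, mul_assoc, hb, mul_one]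

end Conjugation

section TransverseIsing

variable {N : ℕ}

/-- The exponent `h ∑ⱼ Sⱼˣ + c ∑_{j<k} y_{jk} Sⱼᶻ Sₖᶻ` of the Gibbs weight of the transverse-field
Ising model with pair couplings `y`. -/
abbrev transverseIsing (h c : ℝ) : (Pairs N → ℝ) → Matrix (Conf N) (Conf N) ℂ :=
  disordered (h • ∑ j, Sx N j) c SzSz

theorem isHermitian_transverseField (h : ℝ) : (h • ∑ j, Sx N j).IsHermitian :=
  IsSelfAdjoint.smul (.all h) (isSelfAdjoint_sum _ fun j _ => isHermitian_Sx j)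

theorem isHermitian_transverseIsing (h c : ℝ) (y : Pairs N → ℝ) :
    (transverseIsing h c y).IsHermitian :=
  isHermitian_disordered (isHermitian_transverseField h) isHermitian_SzSz c y

theorem transverseIsing_sub_conj_SzSz (h c : ℝ) (y : Pairs N → ℝ) (p : Pairs N) :
    transverseIsing h c y - SzSz p * transverseIsing h c y * SzSz p =
      (2 * h) • (Sx N p.1.1 + Sx N p.1.2) := by
  have hflip {k : Fin N} (hk : SzSz p * Sx N k = -(Sx N k * SzSz p)) :
      Sx N k - SzSz p * Sx N k * SzSz p = (2 : ℝ) • Sx N k := by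
    rw [conj_eq_neg_of_anticommute (SzSz_mul_self p) hk, sub_neg_eq_add, two_smul]
  have hfield : ∑ k, (Sx N k - SzSz p * Sx N k * SzSz p) =
      (2 : ℝ) • (Sx N p.1.1 + Sx N p.1.2) := by
    rw [Fintype.sum_eq_add _ _ p.2.ne fun k hk => by
      rw [conj_eq_of_commute (SzSz_mul_self p) (commute_SzSz_Sx hk.1 hk.2), sub_self],
      hflip (SzSz_mul_Sx_fst p), hflip (SzSz_mul_Sx_snd p), smul_add]
  have hpairs : SzSz p * (∑ q, y q • SzSz q) * SzSz p = ∑ q, y q • SzSz q :=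
    conj_eq_of_commute (SzSz_mul_self p)
      (Commute.sum_right _ _ _ fun q _ => (commute_SzSz p q).smul_right (y q))
  rw [transverseIsing, disordered, mul_add, add_mul, mul_smul_comm c, smul_mul_assoc c, hpairs,
    add_sub_add_right_eq_sub, mul_smul_comm, smul_mul_assoc, ← smul_sub, Finset.mul_sum,
    Finset.sum_mul, ← Finset.sum_sub_distrib, hfield, smul_smul, mul_comm]

theorem mul_thermalAvg_Sx_le (h c : ℝ) (y : Pairs N → ℝ) (j : Fin N) :
    h * thermalAvg (transverseIsing h c y) (Sx N j) ≤ h * Real.tanh h := by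
  have hA : transverseIsing h c y - h • Sx N j =
      h • ∑ k ∈ Finset.univ.erase j, Sx N k + c • ∑ p, y p • SzSz p := by
    rw [transverseIsing, disordered, ← Finset.add_sum_erase _ _ (Finset.mem_univ j), smul_add,
      add_assoc, add_sub_cancel_left]
  have hcomm : Commute (Sz N j) (transverseIsing h c y - h • Sx N j) := by
    rw [hA]
    exact ((Commute.sum_right _ _ _ fun k hk =>
        commute_Sz_Sx (Finset.ne_of_mem_erase hk).symm).smul_right h).add_right
      ((Commute.sum_right _ _ _ fun p _ => (commute_Sz_SzSz j p).smul_right (y p)).smul_right c)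
  have hzero := expTrace_eq_zero_of_anticommute (IsUnit.of_mul_eq_one _ (Sz_mul_self j)) hcomm
    (Sz_mul_Sx_self j)
  have hspin := mul_thermalAvg_add_smul_le
    ((isHermitian_transverseIsing h c y).sub ((isHermitian_Sx j).smul (.all h)))
    (isHermitian_Sx j) (Sx_mul_self j) hzero h
  rwa [sub_add_cancel] at hspin

theorem le_duhamelCorr_SzSz {φ h : ℝ} (hφ : IsBelowFalkBruch φ (2 * (h * Real.tanh h))) (c : ℝ)
    (y : Pairs N → ℝ) (p : Pairs N) : φ ≤ duhamelCorr (transverseIsing h c y) (SzSz p) := by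
  refine le_duhamelCorr hφ (isHermitian_transverseIsing h c y) (isHermitian_SzSz p)
    (SzSz_mul_self p) ?_
  have hfst := mul_thermalAvg_Sx_le h c y p.1.1
  have hsnd := mul_thermalAvg_Sx_le h c y p.1.2
  have hsplit : thermalAvg (transverseIsing h c y) ((2 * h) • (Sx N p.1.1 + Sx N p.1.2)) =
      2 * (h * thermalAvg (transverseIsing h c y) (Sx N p.1.1)) +
        2 * (h * thermalAvg (transverseIsing h c y) (Sx N p.1.2)) := by
    simp only [thermalAvg, map_smul, map_add, smul_eq_mul]
    ring
  rw [transverseIsing_sub_conj_SzSz, hsplit]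
  linarith

end TransverseIsing

section SherringtonKirkpatrick

open scoped BigOperators

variable {N : ℕ}

theorem UN_eq_sum_pairs (g : Fin N → Fin N → ℝ) :
    UN N g = (-(1 / Real.sqrt N)) • ∑ p : Pairs N, g p.1.1 p.1.2 • SzSz p := by
  rw [UN, sum_sum_ite_lt_eq_sum_pairs fun j k => g j k • (Sz N j * Sz N k)]
  rfl

theorem neg_smul_HN (β J b : ℝ) (g : Fin N → Fin N → ℝ) :
    (-β) • HN N J b g =
      transverseIsing (β * b) (β * J / Real.sqrt N) fun p => g p.1.1 p.1.2 := by
  rw [HN, UN_eq_sum_pairs, smul_sub, smul_smul, smul_smul, smul_smul, sub_eq_neg_add, ← neg_smul,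
    transverseIsing, disordered]
  congr 2 <;> ring

theorem isHermitian_HN (J b : ℝ) (g : Fin N → Fin N → ℝ) : (HN N J b g).IsHermitian := by
  have h := isHermitian_transverseIsing (-1 * b) (-1 * J / Real.sqrt N) fun p : Pairs N =>
    g p.1.1 p.1.2
  rwa [← neg_smul_HN, neg_neg, one_smul] at h

theorem gibbs_HN_UN (β J b : ℝ) (g : Fin N → Fin N → ℝ) :
    gibbs β (HN N J b g) (UN N g) = -(1 / Real.sqrt N) *
      ∑ p : Pairs N, g p.1.1 p.1.2 * gibbs β (HN N J b g) (SzSz p) := by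
  simp only [gibbs_eq_thermalAvg (isHermitian_HN J b g), UN_eq_sum_pairs, thermalAvg, map_smul,
    map_sum, smul_eq_mul, mul_div_assoc, Finset.sum_div]

theorem abs_gibbs_HN_SzSz_le_one (β J b : ℝ) (g : Fin N → Fin N → ℝ) (p : Pairs N) :
    |gibbs β (HN N J b g) (SzSz p)| ≤ 1 := by
  rw [gibbs_eq_thermalAvg (isHermitian_HN J b g)]
  exact abs_thermalAvg_le_one ((isHermitian_HN J b g).smul (.all (-β))) (isHermitian_SzSz p)
    (SzSz_mul_self p)

theorem qN_eq_expect (β J b : ℝ) (g : Fin N → Fin N → ℝ) :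
    qN N β J b g = 𝔼 p : Pairs N, gibbs β (HN N J b g) (SzSz p) ^ 2 := by
  rw [qN, sum_sum_ite_lt_eq_sum_pairs fun j k => gibbs β (HN N J b g) (Sz N j * Sz N k) ^ 2,
    Fintype.expect_eq_sum_div_card, card_pairs, Nat.cast_choose_two, div_div_eq_mul_div,
    mul_comm _ (2 : ℝ), mul_div_right_comm]
  simp only [SzSz]

theorem qN_nonneg (β J b : ℝ) (g : Fin N → Fin N → ℝ) : 0 ≤ qN N β J b g :=
  qN_eq_expect β J b g ▸ Finset.expect_nonneg fun _ _ => sq_nonneg _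

theorem nonempty_pairs (hN : 2 ≤ N) : Nonempty (Pairs N) :=
  Fintype.card_pos_iff.1 (card_pairs N ▸ Nat.choose_pos hN)

theorem qN_le_one (hN : 2 ≤ N) (β J b : ℝ) (g : Fin N → Fin N → ℝ) : qN N β J b g ≤ 1 := by
  have := nonempty_pairs hN
  rw [qN_eq_expect]
  exact Finset.expect_le Finset.univ_nonempty fun p _ =>
    (sq_le_one_iff_abs_le_one _).2 (abs_gibbs_HN_SzSz_le_one β J b g p)

end SherringtonKirkpatrick

section DisorderAverage

open scoped BigOperators

variable {N : ℕ} {Ω : Type*} [MeasurableSpace Ω] {μ : Measure Ω} {g : Ω → Fin N → Fin N → ℝ}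

/-- The disorder average of the Duhamel self-correlation of `Sⱼᶻ Sₖᶻ` in the quantum
Sherrington–Kirkpatrick model with couplings `g`, averaged further over all pairs `j < k`. -/
def meanDuhamelCorr (μ : Measure Ω) (β J b : ℝ) (g : Ω → Fin N → Fin N → ℝ) : ℝ :=
  𝔼 p : Pairs N, ∫ ω, duhamelCorr ((-β) • HN N J b (g ω)) (SzSz p) ∂μ

theorem integral_le_of_nonneg_of_le [IsProbabilityMeasure μ] {f : Ω → ℝ} {c : ℝ}
    (h₀ : ∀ ω, 0 ≤ f ω) (hc : ∀ ω, f ω ≤ c) : ∫ ω, f ω ∂μ ≤ c := by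
  simpa using integral_mono_of_nonneg (μ := μ) (.of_forall h₀) (integrable_const c) (.of_forall hc)

theorem meanDuhamelCorr_le_one [IsProbabilityMeasure μ] (hN : 2 ≤ N) (β J b : ℝ) :
    meanDuhamelCorr μ β J b g ≤ 1 := by
  have := nonempty_pairs hN
  have hherm (ω : Ω) := (isHermitian_HN J b (g ω)).smul (.all (-β))
  exact Finset.expect_le Finset.univ_nonempty fun p _ => integral_le_of_nonneg_of_le
    (fun ω => duhamelCorr_nonneg (hherm ω) (isHermitian_SzSz p))
    (fun ω => duhamelCorr_le_one (hherm ω) (isHermitian_SzSz p) (SzSz_mul_self p))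

section GaussianCouplings

variable (hG : HasLaw (fun ω (p : Pairs N) => g ω p.1.1 p.1.2)
  (Measure.pi fun _ => gaussianReal 0 1) μ)
include hG

theorem integrable_duhamelCorr_HN (β J b : ℝ) (p : Pairs N) :
    Integrable (fun ω => duhamelCorr ((-β) • HN N J b (g ω)) (SzSz p)) μ := by
  have := hG.isProbabilityMeasure
  simp only [neg_smul_HN]
  exact integrable_duhamelCorr_disordered hG.aemeasurable (isHermitian_transverseField _)
    isHermitian_SzSz _ (isHermitian_SzSz p) (SzSz_mul_self p)

theorem integrable_gibbs_HN_sq (β J b : ℝ) (p : Pairs N) :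
    Integrable (fun ω => gibbs β (HN N J b (g ω)) (SzSz p) ^ 2) μ := by
  have := hG.isProbabilityMeasure
  simp only [gibbs_eq_thermalAvg (isHermitian_HN J b _), neg_smul_HN]
  exact integrable_thermalAvg_sq_disordered hG.aemeasurable (isHermitian_transverseField _)
    isHermitian_SzSz _ (isHermitian_SzSz p) (SzSz_mul_self p)

theorem integrable_mul_gibbs_HN (β J b : ℝ) (p : Pairs N) :
    Integrable (fun ω => g ω p.1.1 p.1.2 * gibbs β (HN N J b (g ω)) (SzSz p)) μ := by
  simp only [gibbs_eq_thermalAvg (isHermitian_HN J b _), neg_smul_HN]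
  exact integrable_mul_thermalAvg_disordered (integrable_apply_of_hasLaw_pi_gaussianReal hG p)
    hG.aemeasurable (isHermitian_transverseField _) isHermitian_SzSz _ (isHermitian_SzSz p)
    (SzSz_mul_self p)

theorem integral_mul_gibbs_HN (β J b : ℝ) (p : Pairs N) :
    ∫ ω, g ω p.1.1 p.1.2 * gibbs β (HN N J b (g ω)) (SzSz p) ∂μ =
      β * J / Real.sqrt N * (∫ ω, duhamelCorr ((-β) • HN N J b (g ω)) (SzSz p) ∂μ -
        ∫ ω, gibbs β (HN N J b (g ω)) (SzSz p) ^ 2 ∂μ) := by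
  have hparts := integral_sub_mul_thermalAvg_disordered hG
    (isHermitian_transverseField (β * b)) isHermitian_SzSz SzSz_mul_self (β * J / Real.sqrt N) p
  simpa only [sub_zero, NNReal.coe_one, one_mul, ← neg_smul_HN,
    ← gibbs_eq_thermalAvg (isHermitian_HN J b _)] using hparts

theorem le_meanDuhamelCorr (hN : 2 ≤ N) {φ β b : ℝ}
    (hφ : IsBelowFalkBruch φ (2 * (β * b * Real.tanh (β * b)))) (J : ℝ) :
    φ ≤ meanDuhamelCorr μ β J b g := by
  have := hG.isProbabilityMeasure
  have := nonempty_pairs hN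
  have hle (p : Pairs N) (ω : Ω) : φ ≤ duhamelCorr ((-β) • HN N J b (g ω)) (SzSz p) := by
    rw [neg_smul_HN]
    exact le_duhamelCorr_SzSz hφ _ _ p
  refine Finset.le_expect Finset.univ_nonempty fun p _ => ?_
  simpa using integral_mono (integrable_const φ) (integrable_duhamelCorr_HN hG β J b p) (hle p)

theorem integral_qN (β J b : ℝ) :
    ∫ ω, qN N β J b (g ω) ∂μ =
      𝔼 p : Pairs N, ∫ ω, gibbs β (HN N J b (g ω)) (SzSz p) ^ 2 ∂μ := by
  simp only [qN_eq_expect, Fintype.expect_eq_sum_div_card, integral_div]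
  rw [integral_finsetSum _ fun p _ => integrable_gibbs_HN_sq hG β J b p]

theorem integral_gibbs_UN_div (hN : N ≠ 0) (β J b : ℝ) :
    (∫ ω, gibbs β (HN N J b (g ω)) (UN N (g ω)) ∂μ) / N =
      -(β * J / 2) * (1 - 1 / N) * (meanDuhamelCorr μ β J b g - ∫ ω, qN N β J b (g ω) ∂μ) := by
  have hN' : (N : ℝ) ≠ 0 := Nat.cast_ne_zero.2 hN
  have hsqrt : Real.sqrt N ^ 2 = N := Real.sq_sqrt N.cast_nonneg
  have hcard : (Fintype.card (Pairs N) : ℝ) = N * (N - 1) / 2 := by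
    rw [card_pairs, Nat.cast_choose_two]
  simp only [gibbs_HN_UN]
  rw [integral_const_mul, integral_finsetSum _ fun p _ => integrable_mul_gibbs_HN hG β J b p]
  simp only [integral_mul_gibbs_HN hG]
  rw [integral_qN hG, meanDuhamelCorr, ← Finset.expect_sub_distrib, ← Finset.mul_sum,
    ← Fintype.card_mul_expect, hcard]
  field_simp
  rw [hsqrt]
  ring

theorem le_integral_gibbs_UN_div (hN : 2 ≤ N) {β J : ℝ} (hβJ : 0 < β * J) (b : ℝ) :
    -(β * J / 2) ≤ (∫ ω, gibbs β (HN N J b (g ω)) (UN N (g ω)) ∂μ) / N := by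
  have := hG.isProbabilityMeasure
  have hN' : (2 : ℝ) ≤ N := by exact_mod_cast hN
  have hD := meanDuhamelCorr_le_one (μ := μ) (g := g) hN β J b
  have hq : 0 ≤ ∫ ω, qN N β J b (g ω) ∂μ := integral_nonneg fun ω => qN_nonneg β J b (g ω)
  have hinv : (0 : ℝ) ≤ 1 / N ∧ (1 : ℝ) / N ≤ 1 :=
    ⟨by positivity, (div_le_one (by linarith)).2 (by linarith)⟩
  have hle : (1 - 1 / N : ℝ) * (meanDuhamelCorr μ β J b g - ∫ ω, qN N β J b (g ω) ∂μ) ≤ 1 := by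
    nlinarith
  rw [integral_gibbs_UN_div hG (by lia)]
  linarith [mul_le_mul_of_nonneg_left hle (half_pos hβJ).le]

theorem add_energy_sub_inv_le_integral_qN (hN : 2 ≤ N) {φ β J b : ℝ} (hβJ : 0 < β * J)
    (hφ : IsBelowFalkBruch φ (2 * (β * b * Real.tanh (β * b)))) :
    φ + 2 / (β * J) * ((∫ ω, gibbs β (HN N J b (g ω)) (UN N (g ω)) ∂μ) / N) - 1 / N ≤
      ∫ ω, qN N β J b (g ω) ∂μ := by
  have := hG.isProbabilityMeasure
  have hgap : meanDuhamelCorr μ β J b g - ∫ ω, qN N β J b (g ω) ∂μ ≤ 1 :=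
    (sub_le_self _ (integral_nonneg fun ω => qN_nonneg β J b (g ω))).trans
      (meanDuhamelCorr_le_one hN β J b)
  have henergy : 2 / (β * J) * ((∫ ω, gibbs β (HN N J b (g ω)) (UN N (g ω)) ∂μ) / N) =
      (1 / N - 1) * (meanDuhamelCorr μ β J b g - ∫ ω, qN N β J b (g ω) ∂μ) := by
    rw [integral_gibbs_UN_div hG (by lia)]
    field_simp [(mul_ne_zero_iff.1 hβJ.ne').1, (mul_ne_zero_iff.1 hβJ.ne').2]
    ring
  rw [henergy]
  linarith [le_meanDuhamelCorr hG hN hφ J,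
    mul_le_mul_of_nonneg_left hgap (one_div_nonneg.2 N.cast_nonneg)]

end GaussianCouplings

end DisorderAverage

section Liminf

open Filter Topology

theorem add_mul_le_liminf {ι : Type*} {l : Filter ι} [l.NeBot] {u q ε : ι → ℝ} {φ c a : ℝ}
    (hc : 0 ≤ c) (hε : Tendsto ε l (𝓝 0)) (h : ∀ᶠ i in l, φ + c * u i - ε i ≤ q i)
    (hu : l.IsBoundedUnder (· ≥ ·) u) (ha : a ≤ liminf u l) (hq : l.IsBoundedUnder (· ≤ ·) q) :
    φ + c * a ≤ liminf q l := by
  have hlim : Tendsto (fun δ => φ + c * (a - δ) - δ) (𝓝[>] 0) (𝓝 (φ + c * (a - 0) - 0)) :=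
    (Continuous.tendsto (by fun_prop) 0).mono_left nhdsWithin_le_nhds
  rw [sub_zero, sub_zero] at hlim
  refine le_of_tendsto hlim (eventually_mem_nhdsWithin.mono fun δ (hδ : 0 < δ) => ?_)
  have hua : ∀ᶠ i in l, a - δ < u i := eventually_lt_of_lt_liminf (by linarith) hu
  refine le_liminf_of_le hq.isCoboundedUnder_ge ?_
  filter_upwards [h, hua, hε.eventually_lt_const hδ] with i hi hui hεi
  linarith [mul_le_mul_of_nonneg_left hui.le hc]

end Liminf

theorem stmt13_general {Ω : ℕ → Type*} [∀ N, MeasurableSpace (Ω N)] (μ : ∀ N, Measure (Ω N))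
    (β J b : ℝ) (hβJ : 0 < β * J) (g : (N : ℕ) → Ω N → Fin N → Fin N → ℝ)
    (hg : ∀ (N : ℕ) (j k : Fin N), j < k → HasLaw (fun ω => g N ω j k) (gaussianReal 0 1) (μ N))
    (hindep : ∀ N : ℕ, iIndepFun (fun (p : Pairs N) ω => g N ω p.1.1 p.1.2) (μ N))
    (κ : ℝ) (hκ : -κ ≤ Filter.liminf
      (fun N : ℕ => (∫ ω, gibbs β (HN N J b (g N ω)) (UN N (g N ω)) ∂μ N) / N) Filter.atTop)
    (Φ : ℝ → ℝ) (hΦ : ∀ r : ℝ, 0 < r → Φ (r * Real.tanh r) = Real.tanh r / r)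
    (hΦ0 : Φ 0 = 1) :
    Φ (2 * β * b * Real.tanh (β * b)) - 2 * κ / (β * J)
      ≤ Filter.liminf (fun N : ℕ => ∫ ω, qN N β J b (g N ω) ∂μ N) Filter.atTop := by
  have hG (N : ℕ) : HasLaw (fun ω (p : Pairs N) => g N ω p.1.1 p.1.2)
      (Measure.pi fun _ => gaussianReal 0 1) (μ N) :=
    (hindep N).hasLaw_pi fun p => hg N p.1.1 p.1.2 p.2
  have hprob (N : ℕ) : IsProbabilityMeasure (μ N) := (hG N).isProbabilityMeasure
  have hφ : IsBelowFalkBruch (Φ (2 * β * b * Real.tanh (β * b)))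
      (2 * (β * b * Real.tanh (β * b))) := by
    have h := isBelowFalkBruch_of_eq_on_curve hΦ hΦ0
      (mul_nonneg zero_le_two (mul_tanh_nonneg (β * b)))
    rwa [show 2 * β * b * Real.tanh (β * b) = 2 * (β * b * Real.tanh (β * b)) by ring]
  have hlarge := Filter.eventually_ge_atTop 2
  have hliminf := add_mul_le_liminf (div_pos two_pos hβJ).le tendsto_one_div_atTop_nhds_zero_nat
    (hlarge.mono fun N hN => add_energy_sub_inv_le_integral_qN (hG N) hN hβJ hφ)
    ⟨-(β * J / 2), hlarge.mono fun N hN => le_integral_gibbs_UN_div (hG N) hN hβJ b⟩ hκ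
    ⟨1, hlarge.mono fun N hN => integral_le_of_nonneg_of_le
      (fun ω => qN_nonneg β J b (g N ω)) fun ω => qN_le_one hN β J b (g N ω)⟩
  rwa [mul_neg, ← sub_eq_add_neg, div_mul_eq_mul_div] at hliminf

theorem stmt13
    {Ω : Type*} [MeasurableSpace Ω] (μ : Measure Ω) [IsProbabilityMeasure μ]
    (β J b : ℝ) (hβ : 0 < β) (hJ : 0 < J) (hb : 0 ≤ b)
    (g : (N : ℕ) → Ω → Fin N → Fin N → ℝ)
    (hmeas : ∀ (N : ℕ) (j k : Fin N), Measurable fun ω => g N ω j k)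
    (hgauss : ∀ (N : ℕ) (j k : Fin N), j < k →
      Measure.map (fun ω => g N ω j k) μ = gaussianReal 0 1)
    (hindep : ∀ N : ℕ, iIndepFun (m := fun _ => inferInstance)
      (fun (p : {q : Fin N × Fin N // q.1 < q.2}) ω => g N ω p.1.1 p.1.2) μ)
    (κ : ℝ) (hκpos : 0 < κ)
    (hκ : -κ ≤ Filter.liminf
      (fun N : ℕ => (∫ ω, gibbs β (HN N J b (g N ω)) (UN N (g N ω)) ∂μ) / N)
      Filter.atTop)
    (Φ : ℝ → ℝ) (hΦ : ∀ r : ℝ, 0 < r → Φ (r * Real.tanh r) = Real.tanh r / r)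
    (hΦ0 : Φ 0 = 1) :
    Φ (2 * β * b * Real.tanh (β * b)) - 2 * κ / (β * J)
      ≤ Filter.liminf (fun N : ℕ => ∫ ω, qN N β J b (g N ω) ∂μ) Filter.atTop :=
  stmt13_general (fun _ => μ) β J b (mul_pos hβ hJ) g
    (fun N j k hjk => ⟨(hmeas N j k).aemeasurable, hgauss N j k hjk⟩) hindep κ hκ Φ hΦ hΦ0
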